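/- Let A be an AWA, B the Bustan–Rubin–Vardi NBA constructed from A, and w ∈ Σ^ω. Every accepting macrorun (Q₁⁰,Q₂⁰,Q₃⁰,Q₄⁰)(Q₁¹,Q₂¹,Q₃¹,Q₄¹)⋯ of B over w satisfies Q₁ⁱ = Q_{w[i⋯]} for every i ∈ ℕ; in particular, all accepting macroruns of B over w have the same sequence of first components, namely R_w. -/

import Mathlib

/-!
The argument treats `A` and its dual symmetrically.

Along an accepting macrorun, the pair `(Q₁, Q₃)` is a breakpoint (Miyano–Hayashi) bookkeeping for
`A`, and `(Q₂, Q₄)` is one for the dual. An accepting run DAG is read off from such a bookkeeping by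
`suffix_mem_lang_of_breakpoint`: a branch avoiding accepting states from some point on would be
caught in the tracked set at the next reset and never leave it, although that set is empty
infinitely often. Hence a state in `Q₁ⁱ` accepts the suffix `w[i⋯]` in `A`, and a state outside
`Q₁ⁱ` accepts it in the dual.

It remains that `A^s` and its dual never accept the same word (`not_accepts_both`). Two runs, one of
each, share a branch, since models of a formula and of its dual meet in a variable of the formula.
That branch follows the underlying graph and visits both `F` and its complement infinitely often,
so, as there are finitely many states, some SCC meets both, contradicting weakness.
-/

universe u v

/-- Positive Boolean formulas over `Q` (with constants tt and ff, connectives ∧ and ∨). -/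
inductive PosBool (Q : Type u) : Type u
  | tt : PosBool Q
  | ff : PosBool Q
  | var : Q → PosBool Q
  | band : PosBool Q → PosBool Q → PosBool Q
  | bor : PosBool Q → PosBool Q → PosBool Q

namespace PosBool

variable {Q : Type u}

/-- A set `Y` satisfies a positive Boolean formula. -/
def Sat (Y : Set Q) : PosBool Q → Prop
  | .tt => True
  | .ff => False
  | .var q => q ∈ Y
  | .band θ₁ θ₂ => Sat Y θ₁ ∧ Sat Y θ₂
  | .bor θ₁ θ₂ => Sat Y θ₁ ∨ Sat Y θ₂

/-- The states occurring in a formula. -/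
def vars : PosBool Q → Set Q
  | .tt => ∅
  | .ff => ∅
  | .var q => {q}
  | .band θ₁ θ₂ => vars θ₁ ∪ vars θ₂
  | .bor θ₁ θ₂ => vars θ₁ ∪ vars θ₂

/-- The dual formula: exchange tt with ff and ∧ with ∨. -/
def dual : PosBool Q → PosBool Q
  | .tt => .ff
  | .ff => .tt
  | .var q => .var q
  | .band θ₁ θ₂ => .bor (dual θ₁) (dual θ₂)
  | .bor θ₁ θ₂ => .band (dual θ₁) (dual θ₂)

end PosBool

/-- An alternating Büchi automaton with alphabet `α` and state space `Q`. -/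
structure ABA (α : Type v) (Q : Type u) where
  init : Q
  delta : Q → α → PosBool Q
  acc : Set Q

namespace ABA

variable {α : Type v} {Q : Type u}

/-- The automaton `A^q`, i.e. `A` with initial state `q`. -/
def setInit (M : ABA α Q) (q : Q) : ABA α Q := { M with init := q }

/-- Completeness: every transition formula is satisfiable. -/
def Complete (M : ABA α Q) : Prop := ∀ q a, PosBool.Sat (Set.univ : Set Q) (M.delta q a)

/-- Edge of the underlying graph. -/
def edge (M : ABA α Q) (q q' : Q) : Prop := ∃ a, q' ∈ PosBool.vars (M.delta q a)

/-- Reachability in the underlying graph. -/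
def reach (M : ABA α Q) : Q → Q → Prop := Relation.ReflTransGen M.edge

/-- The strongly connected component of a state. -/
def sccOf (M : ABA α Q) (q : Q) : Set Q := {q' | M.reach q q' ∧ M.reach q' q}

/-- `C` is an SCC of the underlying graph. -/
def IsSCC (M : ABA α Q) (C : Set Q) : Prop := ∃ q, C = M.sccOf q

/-- A weak alternating automaton: every SCC is accepting or rejecting. -/
def IsWeak (M : ABA α Q) : Prop := ∀ q : Q, M.sccOf q ⊆ M.acc ∨ M.sccOf q ∩ M.acc = ∅

/-- The dual automaton. -/
def dual (M : ABA α Q) : ABA α Q where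
  init := M.init
  delta := fun q a => (M.delta q a).dual
  acc := M.accᶜ

/-- A run DAG of `M` over the ω-word `w`. -/
structure RunDAG (M : ABA α Q) (w : ℕ → α) where
  V : ℕ → Set Q
  E : ℕ → Q → Q → Prop
  init_mem : M.init ∈ V 0
  edge_src : ∀ ℓ q q', E ℓ q q' → q ∈ V ℓ
  edge_tgt : ∀ ℓ q q', E ℓ q q' → q' ∈ V (ℓ + 1)
  sat : ∀ ℓ q, q ∈ V ℓ → PosBool.Sat {q' | E ℓ q q'} (M.delta q (w ℓ))

/-- An ω-branch of a run DAG. -/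
def RunDAG.IsBranch {M : ABA α Q} {w : ℕ → α} (G : M.RunDAG w) (b : ℕ → Q) : Prop :=
  b 0 = M.init ∧ ∀ ℓ, G.E ℓ (b ℓ) (b (ℓ + 1))

/-- A run DAG is accepting if every ω-branch visits accepting states infinitely often. -/
def RunDAG.Accepting {M : ABA α Q} {w : ℕ → α} (G : M.RunDAG w) : Prop :=
  ∀ b, G.IsBranch b → ∀ n, ∃ m, n ≤ m ∧ b m ∈ M.acc

/-- `M` accepts `w` if there is an accepting run DAG of `M` over `w`. -/
def Accepts (M : ABA α Q) (w : ℕ → α) : Prop := ∃ G : M.RunDAG w, G.Accepting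

/-- The language of `M`. -/
def lang (M : ABA α Q) : Set (ℕ → α) := {w | M.Accepts w}

/-- `R`: the union of the rejecting SCCs. -/
def RejPart (M : ABA α Q) : Set Q := {q | M.sccOf q ∩ M.acc = ∅}

/-- `Acc`: the union of the accepting SCCs. -/
def AccPart (M : ABA α Q) : Set Q := {q | M.sccOf q ⊆ M.acc}

end ABA

/-- The suffix `w[i⋯]` of an ω-word. -/
def suffix {α : Type v} (w : ℕ → α) (i : ℕ) : ℕ → α := fun n => w (i + n)

/-- `Q_w = {s ∈ Q | w ∈ L(A^s)}`. -/
def QSet {α : Type v} {Q : Type u} (M : ABA α Q) (w : ℕ → α) : Set Q :=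
  {s | w ∈ (M.setInit s).lang}

/-- The unique sequence `R_w`, i.e. `i ↦ Q_{w[i⋯]}`. -/
def QSeq {α : Type v} {Q : Type u} (M : ABA α Q) (w : ℕ → α) (i : ℕ) : Set Q :=
  QSet M (suffix w i)

/-- A nondeterministic Büchi automaton. -/
structure NBA (α : Type v) (P : Type u) where
  init : Set P
  delta : P → α → Set P
  acc : Set P

namespace NBA

variable {α : Type v} {P : Type u}

/-- A macrorun of `N` over `w`. -/
def IsMacrorun (N : NBA α P) (w : ℕ → α) (ρ : ℕ → P) : Prop :=
  ρ 0 ∈ N.init ∧ ∀ i, ρ (i + 1) ∈ N.delta (ρ i) (w i)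

/-- An accepting macrorun of `N` over `w`. -/
def IsAccMacrorun (N : NBA α P) (w : ℕ → α) (ρ : ℕ → P) : Prop :=
  N.IsMacrorun w ρ ∧ ∀ n, ∃ m, n ≤ m ∧ ρ m ∈ N.acc

/-- The language of an NBA. -/
def lang (N : NBA α P) : Set (ℕ → α) := {w | ∃ ρ, N.IsAccMacrorun w ρ}

/-- `N^m`: the NBA `N` with set of initial states `{m}`. -/
def fromState (N : NBA α P) (p : P) : NBA α P := { N with init := {p} }

/-- An NBA is unambiguous if it has at most one accepting macrorun over every word. -/
def Unambiguous (N : NBA α P) : Prop :=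
  ∀ w ρ₁ ρ₂, N.IsAccMacrorun w ρ₁ → N.IsAccMacrorun w ρ₂ → ρ₁ = ρ₂

end NBA

/-- Macrostates of the Bustan–Rubin–Vardi construction: tuples `(Q₁, Q₂, Q₃, Q₄)`. -/
abbrev BRVState (Q : Type u) := Set Q × Set Q × Set Q × Set Q

/-- Consistency of a BRV tuple: `Q₂ = Q∖Q₁`, `Q₃ ⊆ Q₁∖F`, `Q₄ ⊆ Q₂∖F̂`. -/
def BRVConsistent {α : Type v} {Q : Type u} (M : ABA α Q) (m : BRVState Q) : Prop :=
  m.2.1 = m.1ᶜ ∧ m.2.2.1 ⊆ m.1 \ M.acc ∧ m.2.2.2 ⊆ m.2.1 \ M.dual.acc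

/-- The Bustan–Rubin–Vardi NBA `B` constructed from an AWA. -/
def BRV {α : Type v} {Q : Type u} (M : ABA α Q) : NBA α (BRVState Q) where
  init := {m | BRVConsistent M m ∧ M.init ∈ m.1}
  delta := fun m σ =>
    {m' | BRVConsistent M m ∧ BRVConsistent M m' ∧
      (∀ s ∈ m.1, PosBool.Sat m'.1 (M.delta s σ)) ∧
      (∀ s ∈ m.2.1, PosBool.Sat m'.2.1 (M.dual.delta s σ)) ∧
      ((m.2.2.1 = ∅ ∧ m.2.2.2 = ∅ ∧ m'.2.2.1 = m'.1 \ M.acc ∧ m'.2.2.2 = m'.2.1 \ M.dual.acc) ∨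
       ((m.2.2.1 ≠ ∅ ∨ m.2.2.2 ≠ ∅) ∧
        (∃ Y₃ ⊆ m'.1, (∀ s ∈ m.2.2.1, PosBool.Sat Y₃ (M.delta s σ)) ∧ m'.2.2.1 = Y₃ \ M.acc) ∧
        (∃ Y₄ ⊆ m'.2.1, (∀ s ∈ m.2.2.2, PosBool.Sat Y₄ (M.dual.delta s σ)) ∧
          m'.2.2.2 = Y₄ \ M.dual.acc)))}
  acc := {m | BRVConsistent M m ∧ m.2.2.1 = ∅ ∧ m.2.2.2 = ∅}

/-- The domain of the distance function at level `i`: `(Q₁ⁱ ∩ R) ∪ (Acc ∖ Q₁ⁱ)`. -/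
def DistDom {α : Type v} {Q : Type u} (M : ABA α Q) (QS : ℕ → Set Q) (i : ℕ) : Set Q :=
  (QS i ∩ M.RejPart) ∪ (M.AccPart \ QS i)

/-- Consistency of a sequence of distance functions (Rules R1 and R2). -/
def ConsistentDist {α : Type v} {Q : Type u} (M : ABA α Q) (w : ℕ → α)
    (QS : ℕ → Set Q) (d : ℕ → Q → ℕ) : Prop :=
  ∀ i : ℕ,
    (∀ p ∈ M.RejPart ∩ QS i,
      PosBool.Sat ((QS (i + 1) \ M.sccOf p) ∪
        {q | q ∈ M.sccOf p ∩ QS (i + 1) ∧ d (i + 1) q ≤ d i p - 1}) (M.delta p (w i)) ∧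
      (1 < d i p →
        ¬ PosBool.Sat ((QS (i + 1) \ M.sccOf p) ∪
          {q | q ∈ M.sccOf p ∩ QS (i + 1) ∧ d (i + 1) q ≤ d i p - 2}) (M.delta p (w i)))) ∧
    (∀ p ∈ M.AccPart \ QS i,
      PosBool.Sat ((QS (i + 1) ∪ M.sccOf p)ᶜ ∪
        {q | q ∈ M.sccOf p \ QS (i + 1) ∧ d (i + 1) q ≤ d i p - 1}) (M.dual.delta p (w i)) ∧
      (1 < d i p →
        ¬ PosBool.Sat ((QS (i + 1) ∪ M.sccOf p)ᶜ ∪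
          {q | q ∈ M.sccOf p \ QS (i + 1) ∧ d (i + 1) q ≤ d i p - 2}) (M.dual.delta p (w i))))

/-- Strict part of a preorder. -/
def StrictOf {Q : Type u} (le : Q → Q → Prop) (p q : Q) : Prop := le p q ∧ ¬ le q p

/-- `le` is a total preorder on `D` (as a relation over `D × D`). -/
def IsTotalPreorderOn {Q : Type u} (D : Set Q) (le : Q → Q → Prop) : Prop :=
  (∀ p q, le p q → p ∈ D ∧ q ∈ D) ∧ (∀ p ∈ D, le p p) ∧
  (∀ p q r, le p q → le q r → le p r) ∧ (∀ p ∈ D, ∀ q ∈ D, le p q ∨ le q p)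

/-- `D` is downwards closed w.r.t. `le` inside the domain `Dom`. -/
def DownClosed {Q : Type u} (le : Q → Q → Prop) (Dom D : Set Q) : Prop :=
  D ⊆ Dom ∧ ∀ q ∈ D, ∀ q', le q' q → q' ∈ D

/-- The set of maximal elements of a preorder on the domain `Dom`. -/
def MaxSet {Q : Type u} (le : Q → Q → Prop) (Dom : Set Q) : Set Q :=
  {q | q ∈ Dom ∧ ∀ q' ∈ Dom, ¬ StrictOf le q q'}

/-- Rule R1' for a rejecting SCC `C`, letter `σ`, sets `Q₁, Q₁'` and preorders `le, le'`. -/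
def RuleR1 {α : Type v} {Q : Type u} (M : ABA α Q) (C : Set Q) (σ : α)
    (Q1 Q1' : Set Q) (le le' : Q → Q → Prop) : Prop :=
  ∀ q ∈ C ∩ Q1, ∀ q' ∈ C ∩ Q1,
    (StrictOf le q q' ↔ ∃ r ∈ C ∩ Q1',
      PosBool.Sat ({r' | r' ∈ C ∩ Q1' ∧ StrictOf le' r' r} ∪ (Q1' \ C)) (M.delta q σ) ∧
      ¬ PosBool.Sat ({r' | r' ∈ C ∩ Q1' ∧ StrictOf le' r' r} ∪ (Q1' \ C)) (M.delta q' σ))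

/-- Rule R2' for an accepting SCC `C`, letter `σ`, sets `Q₁, Q₁'` and preorders `le, le'`. -/
def RuleR2 {α : Type v} {Q : Type u} (M : ABA α Q) (C : Set Q) (σ : α)
    (Q1 Q1' : Set Q) (le le' : Q → Q → Prop) : Prop :=
  ∀ q ∈ C \ Q1, ∀ q' ∈ C \ Q1,
    (StrictOf le q q' ↔ ∃ r ∈ C \ Q1',
      PosBool.Sat ({r' | r' ∈ C \ Q1' ∧ StrictOf le' r' r} ∪ (Q1' ∪ C)ᶜ) (M.dual.delta q σ) ∧
      ¬ PosBool.Sat ({r' | r' ∈ C \ Q1' ∧ StrictOf le' r' r} ∪ (Q1' ∪ C)ᶜ) (M.dual.delta q' σ))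

/-- Consistency of a sequence of families of total preorders (Rules R1' and R2'). -/
def ConsistentPre {α : Type v} {Q : Type u} (M : ABA α Q) (w : ℕ → α)
    (QS : ℕ → Set Q) (pre : ℕ → Set Q → Q → Q → Prop) : Prop :=
  ∀ i C, M.IsSCC C →
    (C ⊆ M.RejPart →
      IsTotalPreorderOn (C ∩ QS i) (pre i C) ∧
      RuleR1 M C (w i) (QS i) (QS (i + 1)) (pre i C) (pre (i + 1) C)) ∧
    (C ⊆ M.AccPart →
      IsTotalPreorderOn (C \ QS i) (pre i C) ∧
      RuleR2 M C (w i) (QS i) (QS (i + 1)) (pre i C) (pre (i + 1) C))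

/-- Macrostates of the `B_u` construction: `(Q₁, Q₂, {⪯_C}_{C∈S}, S, D)`. -/
abbrev BuState (Q : Type u) := Set Q × Set Q × (Set Q → Q → Q → Prop) × Set Q × Set Q

def BuState.q1 {Q : Type u} (m : BuState Q) : Set Q := m.1
def BuState.q2 {Q : Type u} (m : BuState Q) : Set Q := m.2.1
def BuState.pre {Q : Type u} (m : BuState Q) : Set Q → Q → Q → Prop := m.2.2.1
def BuState.sS {Q : Type u} (m : BuState Q) : Set Q := m.2.2.2.1
def BuState.dD {Q : Type u} (m : BuState Q) : Set Q := m.2.2.2.2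

/-- Well-formedness of a `B_u` macrostate. -/
def BuWF {α : Type v} {Q : Type u} (M : ABA α Q) (m : BuState Q) : Prop :=
  m.q2 = m.q1ᶜ ∧
  (∀ C, M.IsSCC C →
    (C ⊆ M.RejPart → IsTotalPreorderOn (m.q1 ∩ C) (m.pre C)) ∧
    (C ⊆ M.AccPart → IsTotalPreorderOn (m.q2 ∩ C) (m.pre C))) ∧
  (∀ C, ¬ M.IsSCC C → m.pre C = fun _ _ => False) ∧
  M.IsSCC m.sS ∧
  (m.sS ⊆ M.RejPart → DownClosed (m.pre m.sS) (m.q1 ∩ m.sS) m.dD) ∧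
  (m.sS ⊆ M.AccPart → DownClosed (m.pre m.sS) (m.q2 ∩ m.sS) m.dD)

/-- The NBA `B_u` constructed from an AWA `M`, a round-robin successor `next` on SCCs
and an initial SCC `C₀`. -/
def Bu {α : Type v} {Q : Type u} (M : ABA α Q) (next : Set Q → Set Q) (C0 : Set Q) :
    NBA α (BuState Q) where
  init := {m | BuWF M m ∧ M.init ∈ m.q1 ∧ m.sS = C0 ∧ m.dD = ∅}
  delta := fun m σ =>
    {m' | BuWF M m ∧ BuWF M m' ∧
      (∀ s ∈ m.q1, PosBool.Sat m'.q1 (M.delta s σ)) ∧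
      (∀ s ∈ m.q2, PosBool.Sat m'.q2 (M.dual.delta s σ)) ∧
      (∀ C, M.IsSCC C →
        (C ⊆ M.RejPart → RuleR1 M C σ m.q1 m'.q1 (m.pre C) (m'.pre C)) ∧
        (C ⊆ M.AccPart → RuleR2 M C σ m.q1 m'.q1 (m.pre C) (m'.pre C))) ∧
      (m.dD = ∅ → m'.sS = next m.sS ∧
        (m'.sS ⊆ M.RejPart → m'.dD = m'.q1 ∩ m'.sS) ∧
        (m'.sS ⊆ M.AccPart → m'.dD = m'.q2 ∩ m'.sS)) ∧
      (m.dD ≠ ∅ → m'.sS = m.sS ∧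
        (m.sS ⊆ M.RejPart →
          (∀ s ∈ m.dD, PosBool.Sat (m'.dD ∪ (m'.q1 \ m.sS)) (M.delta s σ)) ∧
          (∀ D'', DownClosed (m'.pre m.sS) (m'.q1 ∩ m.sS) D'' →
            (∀ s ∈ m.dD, PosBool.Sat (D'' ∪ (m'.q1 \ m.sS)) (M.delta s σ)) → m'.dD ⊆ D'')) ∧
        (m.sS ⊆ M.AccPart →
          (∀ s ∈ m.dD, PosBool.Sat (m'.dD ∪ (m'.q2 \ m.sS)) (M.dual.delta s σ)) ∧
          (∀ D'', DownClosed (m'.pre m.sS) (m'.q2 ∩ m.sS) D'' →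
            (∀ s ∈ m.dD, PosBool.Sat (D'' ∪ (m'.q2 \ m.sS)) (M.dual.delta s σ)) → m'.dD ⊆ D'')))}
  acc := {m | BuWF M m ∧ m.dD = ∅}

/-- Macrostates of the `U` construction: `(Q₁, Q₂, ⪯_C, C, D)`. -/
abbrev UState (Q : Type u) := Set Q × Set Q × (Q → Q → Prop) × Set Q × Set Q

def UState.q1 {Q : Type u} (m : UState Q) : Set Q := m.1
def UState.q2 {Q : Type u} (m : UState Q) : Set Q := m.2.1
def UState.pre {Q : Type u} (m : UState Q) : Q → Q → Prop := m.2.2.1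
def UState.cC {Q : Type u} (m : UState Q) : Set Q := m.2.2.2.1
def UState.dD {Q : Type u} (m : UState Q) : Set Q := m.2.2.2.2

/-- Well-formedness of a `U` macrostate. -/
def UWF {α : Type v} {Q : Type u} (M : ABA α Q) (m : UState Q) : Prop :=
  m.q2 = m.q1ᶜ ∧ M.IsSCC m.cC ∧
  (m.cC ⊆ M.RejPart →
    IsTotalPreorderOn (m.q1 ∩ m.cC) m.pre ∧
    (m.dD = m.q1 ∩ m.cC ∨ m.dD = (m.q1 ∩ m.cC) \ MaxSet m.pre (m.q1 ∩ m.cC))) ∧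
  (m.cC ⊆ M.AccPart →
    IsTotalPreorderOn (m.q2 ∩ m.cC) m.pre ∧
    (m.dD = m.q2 ∩ m.cC ∨ m.dD = (m.q2 ∩ m.cC) \ MaxSet m.pre (m.q2 ∩ m.cC)))

/-- The NBA `U` constructed from an AWA `M`, a round-robin successor `next` on SCCs
and an initial SCC `C₀`. -/
def Uaut {α : Type v} {Q : Type u} (M : ABA α Q) (next : Set Q → Set Q) (C0 : Set Q) :
    NBA α (UState Q) where
  init := {m | UWF M m ∧ M.init ∈ m.q1 ∧ m.cC = C0 ∧ m.dD = ∅}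
  delta := fun m σ =>
    {m' | UWF M m ∧ UWF M m' ∧
      (∀ s ∈ m.q1, PosBool.Sat m'.q1 (M.delta s σ)) ∧
      (∀ s ∈ m.q2, PosBool.Sat m'.q2 (M.dual.delta s σ)) ∧
      (m.dD = ∅ → m'.cC = next m.cC ∧
        (m'.cC ⊆ M.RejPart → m'.dD = m'.q1 ∩ m'.cC) ∧
        (m'.cC ⊆ M.AccPart → m'.dD = m'.q2 ∩ m'.cC)) ∧
      (m.dD ≠ ∅ → m'.cC = m.cC ∧
        (m.cC ⊆ M.RejPart →
          RuleR1 M m.cC σ m.q1 m'.q1 m.pre m'.pre ∧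
          DownClosed m'.pre (m'.q1 ∩ m.cC) m'.dD ∧
          (∀ s ∈ m.dD, PosBool.Sat (m'.dD ∪ (m'.q1 \ m.cC)) (M.delta s σ)) ∧
          (∀ D'', DownClosed m'.pre (m'.q1 ∩ m.cC) D'' →
            (∀ s ∈ m.dD, PosBool.Sat (D'' ∪ (m'.q1 \ m.cC)) (M.delta s σ)) → m'.dD ⊆ D'')) ∧
        (m.cC ⊆ M.AccPart →
          RuleR2 M m.cC σ m.q1 m'.q1 m.pre m'.pre ∧
          DownClosed m'.pre (m'.q2 ∩ m.cC) m'.dD ∧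
          (∀ s ∈ m.dD, PosBool.Sat (m'.dD ∪ (m'.q2 \ m.cC)) (M.dual.delta s σ)) ∧
          (∀ D'', DownClosed m'.pre (m'.q2 ∩ m.cC) D'' →
            (∀ s ∈ m.dD, PosBool.Sat (D'' ∪ (m'.q2 \ m.cC)) (M.dual.delta s σ)) → m'.dD ⊆ D'')))}
  acc := {m | UWF M m ∧ m.dD = ∅}

/-- `tpo n`: the number of total preorders on an `n`-element set. -/
noncomputable def tpo (n : ℕ) : ℕ :=
  Nat.card {r : Fin n → Fin n → Prop // Reflexive r ∧ Transitive r ∧ ∀ a b, r a b ∨ r b a}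


/-! ### Positive Boolean formulas and their duals -/

namespace PosBool

lemma Sat.mono {Q : Type} {Y Z : Set Q} (h : Y ⊆ Z) :
    ∀ {θ : PosBool Q}, Sat Y θ → Sat Z θ
  | .tt, _ => trivial
  | .ff, hs => hs
  | .var _, hs => h hs
  | .band _ _, hs => ⟨Sat.mono h hs.1, Sat.mono h hs.2⟩
  | .bor _ _, hs => hs.imp (Sat.mono h) (Sat.mono h)

/-- A model of a formula and a model of its dual share a variable of the formula. -/
lemma Sat.exists_common {Q : Type} {Y Z : Set Q} :
    ∀ {θ : PosBool Q}, Sat Y θ → Sat Z θ.dual → ∃ q ∈ θ.vars, q ∈ Y ∧ q ∈ Z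
  | .tt, _, h => h.elim
  | .ff, h, _ => h.elim
  | .var q, h, h' => ⟨q, rfl, h, h'⟩
  | .band _ _, h, h' => by
      rcases h' with h' | h'
      · obtain ⟨q, hq, h⟩ := Sat.exists_common h.1 h'
        exact ⟨q, Or.inl hq, h⟩
      · obtain ⟨q, hq, h⟩ := Sat.exists_common h.2 h'
        exact ⟨q, Or.inr hq, h⟩
  | .bor _ _, h, h' => by
      rcases h with h | h
      · obtain ⟨q, hq, h⟩ := Sat.exists_common h h'.1
        exact ⟨q, Or.inl hq, h⟩
      · obtain ⟨q, hq, h⟩ := Sat.exists_common h h'.2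
        exact ⟨q, Or.inr hq, h⟩

end PosBool

/-! ### Run DAGs from breakpoint sequences -/

/-- Soundness of the breakpoint construction. `P` is the set of active states and `R` the set of
those that have not seen an accepting state since the last reset; resets happen at levels where `R`
is empty, and infinitely often. Then every active state accepts the remaining word. -/
lemma suffix_mem_lang_of_breakpoint {α Q : Type} (N : ABA α Q) (w : ℕ → α) (P R : ℕ → Set Q)
    (hP : ∀ i, ∀ s ∈ P i, PosBool.Sat (P (i + 1)) (N.delta s (w i)))
    (hR : ∀ i, ∀ s ∈ R i,
      PosBool.Sat (P (i + 1) ∩ (R (i + 1) ∪ N.acc)) (N.delta s (w i)))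
    (hreset : ∀ n, ∃ m, n ≤ m ∧ R m = ∅ ∧ P (m + 1) \ N.acc ⊆ R (m + 1))
    (i : ℕ) (s : Q) (hs : s ∈ P i) : suffix w i ∈ (N.setInit s).lang := by
  let G : (N.setInit s).RunDAG (suffix w i) :=
    { V := fun ℓ => P (i + ℓ)
      E := fun ℓ q q' => q ∈ P (i + ℓ) ∧ q' ∈ P (i + ℓ + 1) ∧
        (q ∈ R (i + ℓ) → q' ∈ R (i + ℓ + 1) ∪ N.acc)
      init_mem := hs
      edge_src := fun _ _ _ h => h.1
      edge_tgt := fun _ _ _ h => h.2.1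
      sat := by
        intro ℓ q hq
        by_cases hqR : q ∈ R (i + ℓ)
        · exact (hR _ q hqR).mono fun q' h => (⟨hq, h.1, fun _ => h.2⟩ : _ ∧ _ ∧ _)
        · exact (hP _ q hq).mono fun q' h => (⟨hq, h, fun h' => absurd h' hqR⟩ : _ ∧ _ ∧ _) }
  refine ⟨G, fun b hb n => ?_⟩
  by_contra! hn
  have hn' : ∀ m, n ≤ m → b m ∉ N.acc := hn
  obtain ⟨m, hm, -, hm'⟩ := hreset (i + n)
  obtain ⟨k, rfl⟩ := Nat.exists_eq_add_of_le (show i ≤ m by omega)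
  -- after the reset the branch is tracked, and it stays so as it avoids accepting states
  have key : ∀ j, b (k + 1 + j) ∈ R (i + (k + 1 + j)) := by
    intro j
    induction j with
    | zero => exact hm' ⟨(hb.2 k).2.1, hn' _ (by omega)⟩
    | succ j ih => exact ((hb.2 _).2.2 ih).resolve_right (hn' _ (by omega))
  obtain ⟨m', hle, hempty, -⟩ := hreset (i + (k + 1))
  obtain ⟨j, rfl⟩ := Nat.exists_eq_add_of_le hle
  have h := key j
  rw [← add_assoc i, hempty] at h
  exact h

/-! ### Disjointness of a weak automaton and its dual -/

/-- A path in the underlying graph of a weak automaton with finitely many states does not visit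
both accepting and rejecting states infinitely often. -/
lemma ABA.IsWeak.not_both_infinitely_often {α Q : Type} [Finite Q] {M : ABA α Q}
    (hweak : M.IsWeak) (b : ℕ → Q) (hb : ∀ n, M.edge (b n) (b (n + 1)))
    (hacc : ∀ n, ∃ m, n ≤ m ∧ b m ∈ M.acc) (hrej : ∀ n, ∃ m, n ≤ m ∧ b m ∉ M.acc) : False := by
  have hreach : ∀ m k, M.reach (b m) (b (m + k)) := by
    intro m k
    induction k with
    | zero => exact Relation.ReflTransGen.refl
    | succ k ih => exact ih.tail (hb _)
  have hreach' : ∀ m n, m ≤ n → M.reach (b m) (b n) := by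
    intro m n h
    obtain ⟨k, rfl⟩ := Nat.exists_eq_add_of_le h
    exact hreach m k
  have hfreq : ∃ᶠ n in Filter.atTop, ∃ q, b n = q ∧ q ∈ M.acc := by
    rw [Filter.frequently_atTop]
    intro n
    obtain ⟨m, hm, h⟩ := hacc n
    exact ⟨m, hm, b m, rfl, h⟩
  -- pigeonhole: a single accepting state recurs
  have hrec : ∃ q, ∃ᶠ n in Filter.atTop, b n = q ∧ q ∈ M.acc := by
    by_contra! h
    refine hfreq ?_
    have h' := Filter.eventually_all.2 h
    filter_upwards [h'] with n hn
    rintro ⟨q, hq, hqa⟩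
    exact hn q hq hqa
  obtain ⟨q, hq⟩ := hrec
  rw [Filter.frequently_atTop] at hq
  obtain ⟨m₀, -, h₀, hqacc⟩ := hq 0
  obtain ⟨m₁, h01, h₁⟩ := hrej m₀
  obtain ⟨m₂, h12, h₂, -⟩ := hq m₁
  have hmem : b m₁ ∈ M.sccOf q :=
    ⟨h₀ ▸ hreach' m₀ m₁ h01, h₂ ▸ hreach' m₁ m₂ h12⟩
  rcases hweak q with h | h
  · exact h₁ (h hmem)
  · have hmem' : q ∈ M.sccOf q ∩ M.acc :=
      ⟨⟨Relation.ReflTransGen.refl, Relation.ReflTransGen.refl⟩, hqacc⟩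
    rw [h] at hmem'
    exact hmem'

/-- A weak automaton and its dual have disjoint languages from every state. -/
lemma not_accepts_both {α Q : Type} [Finite Q] {M : ABA α Q} (hweak : M.IsWeak) (w : ℕ → α)
    (s : Q) (h : w ∈ (M.setInit s).lang) (h' : w ∈ (M.dual.setInit s).lang) : False := by
  obtain ⟨G, hG⟩ := h
  obtain ⟨H, hH⟩ := h'
  have step : ∀ ℓ q, q ∈ G.V ℓ → q ∈ H.V ℓ →
      ∃ q', q' ∈ (M.delta q (w ℓ)).vars ∧ G.E ℓ q q' ∧ H.E ℓ q q' :=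
    fun ℓ q hq hq' => PosBool.Sat.exists_common (G.sat ℓ q hq) (H.sat ℓ q hq')
  choose f hf using step
  -- a branch common to both runs
  let c : (ℓ : ℕ) → {q : Q // q ∈ G.V ℓ ∧ q ∈ H.V ℓ} := fun ℓ =>
    Nat.rec ⟨s, G.init_mem, H.init_mem⟩ (fun ℓ q =>
      ⟨f ℓ q.1 q.2.1 q.2.2, G.edge_tgt _ _ _ (hf ℓ q.1 q.2.1 q.2.2).2.1,
        H.edge_tgt _ _ _ (hf ℓ q.1 q.2.1 q.2.2).2.2⟩) ℓ
  have hc : ∀ ℓ, (c (ℓ + 1)).1 ∈ (M.delta (c ℓ).1 (w ℓ)).vars ∧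
      G.E ℓ (c ℓ).1 (c (ℓ + 1)).1 ∧ H.E ℓ (c ℓ).1 (c (ℓ + 1)).1 :=
    fun ℓ => hf ℓ (c ℓ).1 (c ℓ).2.1 (c ℓ).2.2
  exact hweak.not_both_infinitely_often (fun ℓ => (c ℓ).1) (fun ℓ => ⟨w ℓ, (hc ℓ).1⟩)
    (hG _ ⟨rfl, fun ℓ => (hc ℓ).2.1⟩) (hH _ ⟨rfl, fun ℓ => (hc ℓ).2.2⟩)

/-! ### First components of accepting macroruns -/

/-- the first components of every accepting macrorun of the BRV
automaton over `w` form the unique sequence `R_w`. -/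
theorem brv_first_components {α Q : Type} [Fintype α] [Fintype Q] (M : ABA α Q)
    (hweak : M.IsWeak) (hcomp : M.Complete) (w : ℕ → α) :
    ∀ ρ : ℕ → BRVState Q, (BRV M).IsAccMacrorun w ρ → ∀ i : ℕ, (ρ i).1 = QSeq M w i := by
  intro ρ ⟨⟨_, hstep⟩, hacc⟩ i
  -- at an accepting macrostate both tracked sets are empty, so both are refilled in the next step
  have hreset : ∀ n, ∃ m, n ≤ m ∧ ((ρ m).2.2.1 = ∅ ∧ (ρ m).2.2.2 = ∅) ∧
      (ρ (m + 1)).2.2.1 = (ρ (m + 1)).1 \ M.acc ∧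
      (ρ (m + 1)).2.2.2 = (ρ (m + 1)).2.1 \ M.dual.acc := by
    intro n
    obtain ⟨m, hm, -, h3, h4⟩ := hacc n
    obtain ⟨-, -, -, -, h | h⟩ := hstep m
    · exact ⟨m, hm, ⟨h3, h4⟩, h.2.2⟩
    · exact (h.1.elim (fun h' => h' h3) (fun h' => h' h4)).elim
  have hpos : ∀ s ∈ (ρ i).1, suffix w i ∈ (M.setInit s).lang := by
    refine suffix_mem_lang_of_breakpoint M w (fun j => (ρ j).1) (fun j => (ρ j).2.2.1)
      (fun j => (hstep j).2.2.1) ?_ ?_ i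
    · intro j s hs
      obtain ⟨-, -, -, -, h | ⟨-, ⟨Y, hY, hsat, heq⟩, -⟩⟩ := hstep j
      · have hs' : s ∈ (ρ j).2.2.1 := hs
        rw [h.1] at hs'
        exact hs'.elim
      · refine (hsat s hs).mono fun q hq => And.intro (hY hq) ?_
        by_cases hqa : q ∈ M.acc
        · exact Or.inr hqa
        · exact Or.inl (heq.ge ⟨hq, hqa⟩)
    · intro n
      obtain ⟨m, hm, h, h'⟩ := hreset n
      exact ⟨m, hm, h.1, h'.1.ge⟩
  have hneg : ∀ s ∈ (ρ i).2.1, suffix w i ∈ (M.dual.setInit s).lang := by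
    refine suffix_mem_lang_of_breakpoint M.dual w (fun j => (ρ j).2.1) (fun j => (ρ j).2.2.2)
      (fun j => (hstep j).2.2.2.1) ?_ ?_ i
    · intro j s hs
      obtain ⟨-, -, -, -, h | ⟨-, -, ⟨Y, hY, hsat, heq⟩⟩⟩ := hstep j
      · have hs' : s ∈ (ρ j).2.2.2 := hs
        rw [h.2.1] at hs'
        exact hs'.elim
      · refine (hsat s hs).mono fun q hq => And.intro (hY hq) ?_
        by_cases hqa : q ∈ M.dual.acc
        · exact Or.inr hqa
        · exact Or.inl (heq.ge ⟨hq, hqa⟩)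
    · intro n
      obtain ⟨m, hm, h, h'⟩ := hreset n
      exact ⟨m, hm, h.2, h'.2.ge⟩
  have hcompl : (ρ i).2.1 = (ρ i).1ᶜ := (hstep i).1.1
  ext s
  refine ⟨hpos s, fun hs => ?_⟩
  by_contra hns
  exact not_accepts_both hweak _ s hs (hneg s (hcompl ▸ hns))
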